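/- (Resurrection Lemma) Let τ be a first-order language and let M, N be τ-structures with a τ-embedding j : M → N that is Σ₁-elementary (for every existential formula φ and every tuple a⃗ from M, M ⊨ φ(a⃗) iff N ⊨ φ(j(a⃗))). Then there exist a τ-structure Q and a τ-embedding k : N → Q such that the composite k ∘ j : M → Q is an elementary embedding. -/

import Mathlib

open FirstOrder FirstOrder.Language

universe u v

namespace ModelCompanionship

variable {L : FirstOrder.Language.{u, v}}

/-- Iterated existential quantification over the last `k` bound variables. -/
def exsN {α : Type*} : ∀ {n k : ℕ}, L.BoundedFormula α (n + k) → L.BoundedFormula α n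
  | _, 0, φ => φ
  | _, _ + 1, φ => exsN φ.ex

/-- A sentence is universal (Π₁) if it is the universal closure of a
quantifier-free formula. -/
def IsUniversalSentence (φ : L.Sentence) : Prop :=
  ∃ (n : ℕ) (ψ : L.BoundedFormula Empty n), ψ.IsQF ∧ φ = ψ.alls

/-- A sentence is Π₂ if it is of the form `∀ x⃗ ∃ y⃗ φ` with `φ` quantifier-free. -/
def IsPi2Sentence (φ : L.Sentence) : Prop :=
  ∃ (m k : ℕ) (ψ : L.BoundedFormula Empty (m + k)), ψ.IsQF ∧ φ = (exsN ψ).alls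

/-- A formula is existential if it is the existential closure of a
quantifier-free formula. -/
def IsExistentialFormula {α : Type*} (φ : L.Formula α) : Prop :=
  ∃ (n : ℕ) (ψ : L.BoundedFormula α n), ψ.IsQF ∧ φ = ψ.exs

/-- A formula is universal if it is the universal closure of a
quantifier-free formula. -/
def IsUniversalFormula {α : Type*} (φ : L.Formula α) : Prop :=
  ∃ (n : ℕ) (ψ : L.BoundedFormula α n), ψ.IsQF ∧ φ = ψ.alls

/-- A bundled nonempty `L`-structure (with domain in universe `max u v`). -/
structure BStruc (L : FirstOrder.Language.{u, v}) where
  carrier : Type (max u v)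
  [str : L.Structure carrier]
  [nonempty' : Nonempty carrier]

instance (N : BStruc L) : L.Structure N.carrier := N.str

instance (N : BStruc L) : Nonempty N.carrier := N.nonempty'

/-- `φ` is a semantic consequence of `T`: it holds in every (nonempty) model of `T`. -/
def Consequence (T : L.Theory) (φ : L.Sentence) : Prop :=
  ∀ M : BStruc L, M.carrier ⊨ T → M.carrier ⊨ φ

/-- A formula with free variables is a semantic consequence of `T` if its universal
closure holds in every (nonempty) model of `T`. -/
def FormulaConsequence {α : Type*} (T : L.Theory) (φ : L.Formula α) : Prop :=
  ∀ M : BStruc L, M.carrier ⊨ T → ∀ v : α → M.carrier, φ.Realize v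

/-- `T_∀`: the set of universal sentences which are consequences of `T`. -/
def univConsequences (T : L.Theory) : L.Theory :=
  {φ | IsUniversalSentence φ ∧ Consequence T φ}

/-- A theory is complete if it is satisfiable and decides every sentence. -/
def IsCompleteTheory (T : L.Theory) : Prop :=
  T.IsSatisfiable ∧ ∀ φ : L.Sentence, Consequence T φ ∨ Consequence T φ.not

/-- A theory is Π₁-complete if it is satisfiable and decides every universal sentence. -/
def Pi1Complete (T : L.Theory) : Prop :=
  T.IsSatisfiable ∧ ∀ φ : L.Sentence, IsUniversalSentence φ →
    (Consequence T φ ∨ Consequence T φ.not)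

/-- An embedding is Σ₁-elementary (`M ≺₁ N`) if it reflects existential formulas
with parameters in the domain. -/
def Sigma1Elementary {M : Type*} {N : Type*} [L.Structure M] [L.Structure N]
    (j : M ↪[L] N) : Prop :=
  ∀ (n : ℕ) (φ : L.Formula (Fin n)), IsExistentialFormula φ →
    ∀ a : Fin n → M, φ.Realize (fun i => j (a i)) → φ.Realize a

/-- An embedding is elementary if it preserves and reflects all first-order formulas. -/
def ElementaryEmb {M : Type*} {N : Type*} [L.Structure M] [L.Structure N]
    (j : M ↪[L] N) : Prop :=
  ∀ (n : ℕ) (φ : L.Formula (Fin n)) (a : Fin n → M),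
    φ.Realize (fun i => j (a i)) ↔ φ.Realize a

/-- `M` is `T`-existentially closed: it embeds into a model of `T` and every
embedding of `M` into a model of `T` is Σ₁-elementary. -/
def IsEC (T : L.Theory) (M : Type*) [L.Structure M] : Prop :=
  (∃ N : BStruc L, N.carrier ⊨ T ∧ Nonempty (M ↪[L] N.carrier)) ∧
  ∀ N : BStruc L, N.carrier ⊨ T → ∀ j : M ↪[L] N.carrier, Sigma1Elementary j

/-- A theory is model complete if every embedding between its models is elementary. -/
def ModelComplete (T : L.Theory) : Prop :=
  ∀ M N : BStruc L, M.carrier ⊨ T → N.carrier ⊨ T →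
    ∀ j : M.carrier ↪[L] N.carrier, ElementaryEmb j

/-- `Tstar` is the model companion of `T`. -/
def IsModelCompanion (T Tstar : L.Theory) : Prop :=
  (∀ M : BStruc L, M.carrier ⊨ T →
    ∃ N : BStruc L, N.carrier ⊨ Tstar ∧ Nonempty (M.carrier ↪[L] N.carrier)) ∧
  (∀ M : BStruc L, M.carrier ⊨ Tstar →
    ∃ N : BStruc L, N.carrier ⊨ T ∧ Nonempty (M.carrier ↪[L] N.carrier)) ∧
  ModelComplete Tstar

/-!
A quantifier-free formula `φ(j(a), b)` true in `N` yields, by `Σ₁`-elementarity, some `b'` in `M`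
with `φ(a, b')`; that is, some `w : N → M` with `w ∘ j = id` satisfies `φ`. The sets of left
inverses `w` of `j` satisfying a given member of the quantifier-free diagram of `N` therefore have
the finite intersection property, and so lie in an ultrafilter `𝒰` on the left inverses of `j`.
Evaluation `x ↦ [w ↦ w x]` embeds `N` into the ultrapower `Q` of `M` by `𝒰`. On `j(M)` it is the
diagonal map, which is elementary by Łoś's theorem.
-/

theorem isQF_restrictFreeVar {α β : Type*} [DecidableEq α] {n : ℕ} {φ : L.BoundedFormula α n}
    (hφ : φ.IsQF) (f : φ.freeVarFinset → β) : (φ.restrictFreeVar f).IsQF := by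
  induction hφ with
  | falsum => exact .falsum
  | of_isAtomic hφ =>
    cases hφ with
    | equal => exact (BoundedFormula.IsAtomic.equal _ _).isQF
    | rel => exact (BoundedFormula.IsAtomic.rel _ _).isQF
  | imp _ _ ih₁ ih₂ => exact (ih₁ _).imp (ih₂ _)

theorem isExistentialFormula_iExs {α β : Type*} [Finite β] {φ : L.Formula (α ⊕ β)}
    (hφ : BoundedFormula.IsQF φ) : IsExistentialFormula (φ.iExs β) :=
  ⟨_, _, hφ.relabel _, rfl⟩

section Diagram

variable (L) in
/-- The quantifier-free diagram of `N`, encoded without constants: elements of `N` are used as free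
variables, to be assigned to themselves. -/
def qfDiagram (N : Type*) [L.Structure N] : Set (L.Formula N) :=
  {φ | BoundedFormula.IsQF φ ∧ φ.Realize id}

theorem inf_mem_qfDiagram {N : Type*} [L.Structure N] {φ ψ : L.Formula N}
    (hφ : φ ∈ qfDiagram L N) (hψ : ψ ∈ qfDiagram L N) : φ ⊓ ψ ∈ qfDiagram L N :=
  ⟨hφ.1.inf hψ.1, Formula.realize_inf.2 ⟨hφ.2, hψ.2⟩⟩

variable {N Q : Type*} [L.Structure N] [L.Structure Q]

theorem realize_iff_of_realize_qfDiagram {k : N → Q}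
    (hk : ∀ φ ∈ qfDiagram L N, φ.Realize k)
    {φ : L.Formula N} (hφ : BoundedFormula.IsQF φ) : φ.Realize k ↔ φ.Realize id := by
  refine ⟨fun h => ?_, fun h => hk φ ⟨hφ, h⟩⟩
  by_contra hnot
  exact Formula.realize_not.1 (hk φ.not ⟨hφ.not, Formula.realize_not.2 hnot⟩) h

/-- Robinson's diagram lemma: a map under which `Q` satisfies the quantifier-free diagram of `N`
is an embedding. -/
def embeddingOfRealizeQFDiagram (k : N → Q)
    (hk : ∀ φ ∈ qfDiagram L N, φ.Realize k) : N ↪[L] Q where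
  toFun := k
  inj' x y hxy := by
    have hEq := realize_iff_of_realize_qfDiagram hk
      (φ := (Term.var x).equal (Term.var y)) (BoundedFormula.IsAtomic.equal _ _).isQF
    simp only [Formula.realize_equal, Term.realize_var] at hEq
    exact hEq.1 hxy
  map_fun' f x := by
    have hEq := realize_iff_of_realize_qfDiagram hk
      (φ := (Term.var (Structure.funMap f x)).equal (Term.func f fun i => Term.var (x i)))
      (BoundedFormula.IsAtomic.equal _ _).isQF
    simp only [Formula.realize_equal, Term.realize_var, Term.realize_func] at hEq
    exact hEq.2 rfl
  map_rel' r x := by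
    have hRel := realize_iff_of_realize_qfDiagram hk
      (φ := r.formula fun i => Term.var (x i)) (BoundedFormula.IsAtomic.rel _ _).isQF
    simp only [Formula.realize_rel, Term.realize_var] at hRel
    exact hRel

end Diagram

section Ultrapower

variable {M N : Type*} [L.Structure M] [L.Structure N] {j : M ↪[L] N}

/-- The set-theoretic left inverses of `j`, not required to be homomorphisms. They index the
ultrapower of `M` into which `N` is embedded. -/
abbrev Retraction (j : M ↪[L] N) : Type _ :=
  {w : N → M // Function.LeftInverse w j}

/-- The map from `N` to an ultrapower of `M` indexed by the retractions of `j`, sending `x` to the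
class of the evaluation `w ↦ w x`. -/
def ultrapowerEval (𝒰 : Ultrafilter (Retraction j)) (x : N) :
    (𝒰 : Filter (Retraction j)).Product fun _ => M :=
  ((fun w => w.1 x : Retraction j → M) : (𝒰 : Filter (Retraction j)).Product fun _ => M)

variable [Nonempty M] {𝒰 : Ultrafilter (Retraction j)} {α : Type*}

theorem realize_ultrapowerEval_comp (φ : L.Formula α) (a : α → N) :
    φ.Realize (ultrapowerEval 𝒰 ∘ a) ↔
      ∀ᶠ w in (𝒰 : Filter (Retraction j)), φ.Realize (w.1 ∘ a) :=
  Ultraproduct.realize_formula_cast φ fun i (w : Retraction j) => w.1 (a i)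

theorem realize_ultrapowerEval_comp_embedding (φ : L.Formula α) (a : α → M) :
    φ.Realize (ultrapowerEval 𝒰 ∘ j ∘ a) ↔ φ.Realize a := by
  have hretract (w : Retraction j) : w.1 ∘ j ∘ a = a := funext fun i => w.2 (a i)
  simp only [realize_ultrapowerEval_comp, hretract, Filter.eventually_const]

end Ultrapower

namespace Sigma1Elementary

variable {M N : Type*} [L.Structure M] [L.Structure N] {j : M ↪[L] N}

theorem realize_of_isExistentialFormula (hj : Sigma1Elementary j) {α : Type*} {φ : L.Formula α}
    (hφ : IsExistentialFormula φ) {a : α → M} (h : φ.Realize (j ∘ a)) : φ.Realize a := by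
  classical
  obtain ⟨n, ψ, hψ, rfl⟩ := hφ
  let e := ψ.freeVarFinset.equivFin
  let b : Fin ψ.freeVarFinset.card → M := fun i => a (e.symm i)
  have hrestrict : (ψ.restrictFreeVar e).exs.Realize (j ∘ b) := by
    obtain ⟨xs, hxs⟩ := BoundedFormula.realize_exs.1 h
    exact BoundedFormula.realize_exs.2
      ⟨xs, (BoundedFormula.realize_restrictFreeVar _ (by simp [b])).2 hxs⟩
  have hreflect : (ψ.restrictFreeVar e).exs.Realize b :=
    hj _ _ ⟨n, _, isQF_restrictFreeVar hψ e, rfl⟩ b hrestrict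
  obtain ⟨xs, hxs⟩ := BoundedFormula.realize_exs.1 hreflect
  exact BoundedFormula.realize_exs.2
    ⟨xs, (BoundedFormula.realize_restrictFreeVar _ (by simp [b])).1 hxs⟩

theorem exists_retraction_realize [Nonempty M] (hj : Sigma1Elementary j) {φ : L.Formula N}
    (hφ : φ ∈ qfDiagram L N) : ∃ w : Retraction j, φ.Realize w.1 := by
  classical
  -- Variables naming elements of `j(M)` become parameters; the others are quantified.
  let split (x : φ.freeVarFinset) : M ⊕ φ.freeVarFinset :=
    Function.extend j Sum.inl (fun _ => Sum.inr x) x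
  let ψ : L.Formula (M ⊕ φ.freeVarFinset) := φ.restrictFreeVar split
  have hN : (ψ.iExs φ.freeVarFinset).Realize (j ∘ id) := by
    refine Formula.realize_iExs.2
      ⟨(↑), (BoundedFormula.realize_restrictFreeVar id fun x => ?_).2 hφ.2⟩
    by_cases hx : ∃ m, j m = x
    · obtain ⟨m, hm⟩ := hx
      simp [split, ← hm, j.injective.extend_apply]
    · simp [split, Function.extend_apply' _ _ _ hx]
  obtain ⟨b, hb⟩ := Formula.realize_iExs.1 <| hj.realize_of_isExistentialFormula
    (isExistentialFormula_iExs (isQF_restrictFreeVar hφ.1 split)) hN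
  let w : N → M := Function.extend j id (Function.extend (↑) b fun _ => Classical.arbitrary M)
  refine ⟨⟨w, j.injective.extend_apply _ _⟩,
    (BoundedFormula.realize_restrictFreeVar w fun x => ?_).1 hb⟩
  by_cases hx : ∃ m, j m = x
  · obtain ⟨m, hm⟩ := hx
    simp [split, w, ← hm, j.injective.extend_apply]
  · simp [split, w, Function.extend_apply' _ _ _ hx]

theorem exists_ultrafilter_eventually_realize [Nonempty M] (hj : Sigma1Elementary j) :
    ∃ 𝒰 : Ultrafilter (Retraction j),
      ∀ φ ∈ qfDiagram L N, ∀ᶠ w in (𝒰 : Filter (Retraction j)), φ.Realize w.1 := by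
  let solutions (φ : qfDiagram L N) : Set (Retraction j) := {w | φ.1.Realize w.1}
  have hsolutions (φ : qfDiagram L N) : (Filter.principal (solutions φ)).NeBot :=
    Filter.principal_neBot_iff.2 (hj.exists_retraction_realize φ.2)
  have hdirected : Directed (· ≥ ·) fun φ => Filter.principal (solutions φ) := fun φ ψ =>
    ⟨⟨φ ⊓ ψ, inf_mem_qfDiagram φ.2 ψ.2⟩,
      Filter.principal_mono.2 fun _ hw => (Formula.realize_inf.1 hw).1,
      Filter.principal_mono.2 fun _ hw => (Formula.realize_inf.1 hw).2⟩
  have : Nonempty (qfDiagram L N) := ⟨⟨⊤, .top, Formula.realize_top.2 trivial⟩⟩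
  have := Filter.iInf_neBot_of_directed' hdirected hsolutions
  exact ⟨.of (⨅ φ, Filter.principal (solutions φ)), fun φ hφ =>
    Ultrafilter.of_le _ (Filter.mem_iInf_of_mem ⟨φ, hφ⟩ (Filter.mem_principal_self _))⟩

end Sigma1Elementary

theorem resurrection_general {M N : Type*} [L.Structure M] [L.Structure N] [Nonempty M]
    {j : M ↪[L] N} (hj : Sigma1Elementary j) :
    ∃ (𝒰 : Ultrafilter (Retraction j))
      (k : N ↪[L] (𝒰 : Filter (Retraction j)).Product fun _ => M), ElementaryEmb (k.comp j) := by
  obtain ⟨𝒰, h𝒰⟩ := hj.exists_ultrafilter_eventually_realize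
  exact ⟨𝒰, embeddingOfRealizeQFDiagram (ultrapowerEval 𝒰) fun φ hφ =>
      (realize_ultrapowerEval_comp φ id).2 (h𝒰 φ hφ),
    fun _ φ a => realize_ultrapowerEval_comp_embedding φ a⟩

/-- Resurrection Lemma: a Σ₁-elementary embedding `j : M → N` can be completed, by an
embedding `k : N → Q`, to an elementary embedding `k ∘ j : M → Q`. -/
theorem resurrection {M N : Type (max u v)} [L.Structure M] [L.Structure N]
    [Nonempty M] [Nonempty N] (j : M ↪[L] N)
    (hj : ∀ (n : ℕ) (φ : L.Formula (Fin n)), IsExistentialFormula φ →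
      ∀ a : Fin n → M, (φ.Realize a ↔ φ.Realize (fun i => j (a i)))) :
    ∃ (Q : BStruc L) (k : N ↪[L] Q.carrier), ElementaryEmb (k.comp j) := by
  obtain ⟨𝒰, k, hk⟩ := resurrection_general fun n φ hφ a => (hj n φ hφ a).2
  exact ⟨⟨(𝒰 : Filter (Retraction j)).Product fun _ => M⟩, k, hk⟩

end ModelCompanionship
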